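/- arXiv:2603.01201 — 4 statements merged into one kernel-verified Lean document; each statement's English description precedes it below -/
import Mathlib

section
/- For every LTLf formula φ in negation normal form over a set of atoms P, every interpretation w ∈ 2^P, and every finite, possibly empty trace τ ∈ (2^P)^*, the trace w·τ (τ with w prepended) satisfies φ if and only if τ satisfies prog(φ, w). -/
inductive LTLf (P : Type) : Type where
  | tt : LTLf P
  | ff : LTLf P
  | atom : P → LTLf P
  | natom : P → LTLf P
  | conj : LTLf P → LTLf P → LTLf P
  | disj : LTLf P → LTLf P → LTLf P
  | next : LTLf P → LTLf P
  | wnext : LTLf P → LTLf P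
  | untl : LTLf P → LTLf P → LTLf P
  | release : LTLf P → LTLf P → LTLf P
  deriving DecidableEq

def LTLf.Sat {P : Type} : List (Set P) → LTLf P → Prop
  | _, .tt => True
  | _, .ff => False
  | [], .atom _ => False
  | w :: _, .atom p => p ∈ w
  | [], .natom _ => False
  | w :: _, .natom p => p ∉ w
  | τ, .conj φ₁ φ₂ => LTLf.Sat τ φ₁ ∧ LTLf.Sat τ φ₂
  | τ, .disj φ₁ φ₂ => LTLf.Sat τ φ₁ ∨ LTLf.Sat τ φ₂
  | [], .next _ => False
  | _ :: τ, .next φ => τ ≠ [] ∧ LTLf.Sat τ φ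
  | [], .wnext _ => True
  | _ :: τ, .wnext φ => τ = [] ∨ LTLf.Sat τ φ
  | [], .untl _ _ => False
  | w :: τ, .untl φ₁ φ₂ =>
      LTLf.Sat (w :: τ) φ₂ ∨ (LTLf.Sat (w :: τ) φ₁ ∧ LTLf.Sat τ (.untl φ₁ φ₂))
  | [], .release _ _ => True
  | w :: τ, .release φ₁ φ₂ =>
      LTLf.Sat (w :: τ) φ₂ ∧ (LTLf.Sat (w :: τ) φ₁ ∨ LTLf.Sat τ (.release φ₁ φ₂))
termination_by τ φ => (τ.length, sizeOf φ)

open Classical in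
noncomputable def LTLf.prog {P : Type} : LTLf P → Set P → LTLf P
  | .tt, _ => .tt
  | .ff, _ => .ff
  | .atom p, w => if p ∈ w then .tt else .ff
  | .natom p, w => if p ∈ w then .ff else .tt
  | .conj φ₁ φ₂, w => .conj (φ₁.prog w) (φ₂.prog w)
  | .disj φ₁ φ₂, w => .disj (φ₁.prog w) (φ₂.prog w)
  | .next φ, _ => .conj φ (.untl .tt .tt)
  | .wnext φ, _ => .disj φ (.release .ff .ff)
  | .untl φ₁ φ₂, w =>
      .disj (φ₂.prog w) (.conj (φ₁.prog w) (.conj (.untl φ₁ φ₂) (.untl .tt .tt)))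
  | .release φ₁ φ₂, w =>
      .conj (φ₂.prog w) (.disj (φ₁.prog w) (.disj (.release φ₁ φ₂) (.release .ff .ff)))

noncomputable def LTLf.progTrace {P : Type} (φ : LTLf P) (h : List (Set P)) : LTLf P :=
  h.foldl LTLf.prog φ

/-!
The formulas `tt U tt` and `ff R ff` say that the trace is nonempty, respectively empty, so they are
exactly the guards that turn `X φ` and `W φ` on `w :: τ` into conditions on `τ`. On nonempty traces
the expansion laws `φ U ψ ≡ ψ ∨ (φ ∧ X (φ U ψ))` and `φ R ψ ≡ ψ ∧ (φ ∨ W (φ R ψ))` reduce the other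
temporal operators to these two; the guards cost nothing there, because on an empty tail an until is
false and a release true.
-/

namespace LTLf

variable {P : Type} {φ ψ : LTLf P} {w : Set P} {τ : List (Set P)}

theorem sat_conj : Sat τ (.conj φ ψ) ↔ Sat τ φ ∧ Sat τ ψ := by
  rw [Sat]

theorem sat_disj : Sat τ (.disj φ ψ) ↔ Sat τ φ ∨ Sat τ ψ := by
  rw [Sat]

theorem sat_cons_next : Sat (w :: τ) (.next φ) ↔ τ ≠ [] ∧ Sat τ φ := by
  rw [Sat]

theorem sat_cons_wnext : Sat (w :: τ) (.wnext φ) ↔ τ = [] ∨ Sat τ φ := by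
  rw [Sat]

theorem not_sat_nil_untl : ¬ Sat [] (.untl φ ψ) := by
  simp only [Sat, not_false_eq_true]

theorem sat_nil_release : Sat [] (.release φ ψ) := by
  simp only [Sat]

theorem sat_untl_tt_tt : Sat τ (.untl .tt .tt) ↔ τ ≠ [] := by
  cases τ <;> simp [Sat]

theorem sat_release_ff_ff : Sat τ (.release .ff .ff) ↔ τ = [] := by
  cases τ <;> simp [Sat]

theorem sat_cons_untl_iff_expansion :
    Sat (w :: τ) (.untl φ ψ) ↔ Sat (w :: τ) (.disj ψ (.conj φ (.next (.untl φ ψ)))) := by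
  have ne_nil_of_sat : Sat τ (.untl φ ψ) → τ ≠ [] := by
    rintro h rfl
    exact not_sat_nil_untl h
  rw [sat_disj, sat_conj, sat_cons_next, and_iff_right_of_imp ne_nil_of_sat, Sat]

theorem sat_cons_release_iff_expansion :
    Sat (w :: τ) (.release φ ψ) ↔ Sat (w :: τ) (.conj ψ (.disj φ (.wnext (.release φ ψ)))) := by
  have sat_of_eq_nil : τ = [] → Sat τ (.release φ ψ) := by
    rintro rfl
    exact sat_nil_release
  rw [sat_conj, sat_disj, sat_cons_wnext, or_iff_right_of_imp sat_of_eq_nil, Sat]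

theorem prog_untl :
    (untl φ ψ).prog w = .disj (ψ.prog w) (.conj (φ.prog w) ((next (.untl φ ψ)).prog w)) :=
  rfl

theorem prog_release :
    (release φ ψ).prog w = .conj (ψ.prog w) (.disj (φ.prog w) ((wnext (.release φ ψ)).prog w)) :=
  rfl

theorem sat_cons_next_iff_sat_prog : Sat (w :: τ) (.next φ) ↔ Sat τ ((next φ).prog w) := by
  rw [prog, sat_cons_next, sat_conj, sat_untl_tt_tt, and_comm]

theorem sat_cons_wnext_iff_sat_prog : Sat (w :: τ) (.wnext φ) ↔ Sat τ ((wnext φ).prog w) := by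
  rw [prog, sat_cons_wnext, sat_disj, sat_release_ff_ff, or_comm]

end LTLf

/-- For every LTLf formula φ in NNF over atoms P, every interpretation
w ∈ 2^P and every finite (possibly empty) trace τ, the trace w·τ satisfies φ iff
τ satisfies prog(φ, w). -/
theorem ltlf_prog_one_step {P : Type} (φ : LTLf P) (w : Set P) (τ : List (Set P)) :
    LTLf.Sat (w :: τ) φ ↔ LTLf.Sat τ (φ.prog w) := by
  induction φ with
  | tt | ff => simp only [LTLf.prog, LTLf.Sat]
  | atom p | natom p => by_cases h : p ∈ w <;> simp [LTLf.prog, LTLf.Sat, h]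
  | conj φ ψ ihφ ihψ => rw [LTLf.prog, LTLf.sat_conj, LTLf.sat_conj, ihφ, ihψ]
  | disj φ ψ ihφ ihψ => rw [LTLf.prog, LTLf.sat_disj, LTLf.sat_disj, ihφ, ihψ]
  | next φ => exact LTLf.sat_cons_next_iff_sat_prog
  | wnext φ => exact LTLf.sat_cons_wnext_iff_sat_prog
  | untl φ ψ ihφ ihψ =>
    simp only [LTLf.sat_cons_untl_iff_expansion, LTLf.prog_untl, LTLf.sat_disj, LTLf.sat_conj,
      ihφ, ihψ, LTLf.sat_cons_next_iff_sat_prog]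
  | release φ ψ ihφ ihψ =>
    simp only [LTLf.sat_cons_release_iff_expansion, LTLf.prog_release, LTLf.sat_conj,
      LTLf.sat_disj, ihφ, ihψ, LTLf.sat_cons_wnext_iff_sat_prog]
end

section
/- Let G be a DFA game over disjoint finite atom sets Y and X with finite state set S, transition δ and accepting set F, and let s ∈ S. There exists a game strategy κ : S → 2^Y that is winning in the game G_s obtained from G by changing the start state to s if and only if s belongs to the winning region W = ⋃_{i∈ℕ} W_i, where W_0 = F and W_{i+1} = W_i ∪ { s' ∈ S | ∃ Y' ⊆ Y, ∀ X' ⊆ X, δ(s', Y'∪X') ∈ W_i }. -/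
/-- The joint interpretation over atoms `Y ⊕ X` determined by an agent move `m.1 ⊆ Y`
and an environment move `m.2 ⊆ X`. -/
def joint {Y X : Type} (m : Set Y × Set X) : Set (Y ⊕ X) :=
  {a | Sum.elim (· ∈ m.1) (· ∈ m.2) a}

/-- The finite trace (over `2^(Y∪X)`) formed by the first `k` joint moves of a play. -/
def jointTrace {Y X : Type} (π : ℕ → Set Y × Set X) (k : ℕ) : List (Set (Y ⊕ X)) :=
  (List.range k).map fun i => joint (π i)

/-- The finite trace corresponding to a history (finite sequence of joint moves). -/
def histTrace {Y X : Type} (h : List (Set Y × Set X)) : List (Set (Y ⊕ X)) :=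
  h.map joint

/-- A play is σ-consistent if at every instant the agent move is the one prescribed by
the strategy σ on the preceding environment moves (in particular `Y_0 = σ(ε)`). -/
def PlayConsistent {Y X : Type} (σ : List (Set X) → Set Y) (π : ℕ → Set Y × Set X) : Prop :=
  ∀ i : ℕ, (π i).1 = σ ((List.range i).map fun j => (π j).2)

/-- A history is σ-consistent if every agent move in it is prescribed by σ on the
preceding environment moves. -/
def HistConsistent {Y X : Type} (σ : List (Set X) → Set Y) (h : List (Set Y × Set X)) : Prop :=
  ∀ (i : ℕ) (hi : i < h.length), (h.get ⟨i, hi⟩).1 = σ ((h.take i).map Prod.snd)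
/-- A play is κ-consistent in the DFA game `G` if at every instant the agent move is the
one prescribed by the game strategy κ on the state that `G` reaches from its start state
on reading the joint trace so far (in particular `Y_0 = κ(ι)`). -/
def GameConsistent {Y X S : Type} (G : DFA (Set (Y ⊕ X)) S) (κ : S → Set Y)
    (π : ℕ → Set Y × Set X) : Prop :=
  ∀ i : ℕ, (π i).1 = κ (G.evalFrom G.start (jointTrace π i))

/-- A game strategy κ is winning in the DFA game `G` if every κ-consistent play has a
finite prefix accepted by `G`. -/
def GameWinning {Y X S : Type} (G : DFA (Set (Y ⊕ X)) S) (κ : S → Set Y) : Prop :=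
  ∀ π : ℕ → Set Y × Set X, GameConsistent G κ π →
    ∃ k : ℕ, G.evalFrom G.start (jointTrace π k) ∈ G.accept

/-- The fixpoint approximants of the winning region: W₀ = F and
W_{i+1} = W_i ∪ { s | ∃ Y' ⊆ Y, ∀ X' ⊆ X, δ(s, Y'∪X') ∈ W_i }. -/
def WinApprox {Y X S : Type} (G : DFA (Set (Y ⊕ X)) S) : ℕ → Set S
  | 0 => G.accept
  | i + 1 => WinApprox G i ∪
      {s | ∃ A : Set Y, ∀ E : Set X, G.step s (joint (A, E)) ∈ WinApprox G i}

/-- The state of the DFA game `G` reached from state `s` against the environment move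
sequence `e` when the agent plays according to the game strategy κ. -/
def inducedState {Y X S : Type} (G : DFA (Set (Y ⊕ X)) S) (κ : S → Set Y) :
    S → List (Set X) → S
  | s, [] => s
  | s, x :: e => inducedState G κ (G.step s (joint (κ s, x))) e

/-- The agent strategy induced by the game strategy κ on the DFA game `G`:
σ(ε) = κ(ι) and σ(X₀⋯Xₙ) = κ(δ(ι, (Y₀∪X₀)⋯(Yₙ∪Xₙ))) with the agent moves Yᵢ
themselves determined recursively by the strategy. -/
def inducedStrategy {Y X S : Type} (G : DFA (Set (Y ⊕ X)) S) (κ : S → Set Y)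
    (e : List (Set X)) : Set Y :=
  κ (inducedState G κ G.start e)

/-!
If the agent wins with `κ` and `T` contains the accepting states and all its own controllable
predecessors, then the start state lies in `T`: from any state outside `T` the environment can
answer `κ` with a move that stays outside, and repeating such answers forever never reaches
acceptance. As the environment has finitely many moves, controllable predecessors commute with
increasing unions, so `T = ⋃ i, W_i` is such a set.

Conversely, on each state of `W` let `κ` play a move witnessing membership in the controllable
predecessor of the earliest possible `W_i`. This lowers the index at every step until the play
accepts.
-/

section ControllablePredecessor

variable {Y X S : Type} (G : DFA (Set (Y ⊕ X)) S)

/-- The controllable predecessor operator: the states from which the agent has a move that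
leads into `T` whatever the environment answers. It is the operator that `WinApprox` adds at each
stage. -/
def controllablePre (T : Set S) : Set S :=
  {s | ∃ A : Set Y, ∀ E : Set X, G.step s (joint (A, E)) ∈ T}

theorem controllablePre_mono : Monotone (controllablePre G) :=
  fun _ _ hTU _ ⟨A, hA⟩ => ⟨A, fun E => hTU (hA E)⟩

theorem controllablePre_iUnion_of_directed [Finite X] {ι : Sort*} [Nonempty ι] {U : ι → Set S}
    (hU : Directed (· ⊆ ·) U) :
    controllablePre G (⋃ i, U i) = ⋃ i, controllablePre G (U i) := by
  refine Set.Subset.antisymm ?_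
    (Set.iUnion_subset fun i => controllablePre_mono G (Set.subset_iUnion U i))
  rintro s ⟨A, hA⟩
  choose i hi using fun E => Set.mem_iUnion.1 (hA E)
  obtain ⟨j, hj⟩ := hU.finite_le i
  exact Set.mem_iUnion.2 ⟨j, A, fun E => hj E (hi E)⟩

/-- A state may lie in the controllable predecessors of many `U i`; a move that works for the
least such `i` works for all of them. -/
theorem exists_strategy_forall_mem_controllablePre {ι : Type*} [LinearOrder ι]
    [WellFoundedLT ι] {U : ι → Set S} (hU : Monotone U) :
    ∃ κ : S → Set Y, ∀ s i, s ∈ controllablePre G (U i) →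
      ∀ E : Set X, G.step s (joint (κ s, E)) ∈ U i := by
  suffices hmove : ∀ s, ∃ A : Set Y, ∀ i, s ∈ controllablePre G (U i) →
      ∀ E : Set X, G.step s (joint (A, E)) ∈ U i by
    choose κ hκ using hmove
    exact ⟨κ, hκ⟩
  intro s
  rcases Set.eq_empty_or_nonempty {i | s ∈ controllablePre G (U i)} with hempty | hne
  · exact ⟨∅, fun i hi => (Set.eq_empty_iff_forall_notMem.1 hempty i hi).elim⟩
  · obtain ⟨m, ⟨A, hA⟩, hmin⟩ := wellFounded_lt.has_min _ hne
    exact ⟨A, fun i hi E => hU (not_lt.1 (hmin i hi)) (hA E)⟩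

theorem winApprox_mono : Monotone (WinApprox G) :=
  monotone_nat_of_le_succ fun _ => Set.subset_union_left

theorem winApprox_succ (i : ℕ) :
    WinApprox G (i + 1) = G.accept ∪ controllablePre G (WinApprox G i) := by
  refine Set.Subset.antisymm ?_ (Set.union_subset
    (Set.subset_union_of_subset_left (winApprox_mono G i.zero_le) _) Set.subset_union_right)
  induction i with
  | zero => exact subset_rfl
  | succ i ih =>
    have hpre := controllablePre_mono G (winApprox_mono G i.le_succ)
    exact Set.union_subset (ih.trans (Set.union_subset_union_right _ hpre))
      Set.subset_union_right

theorem controllablePre_iUnion_winApprox_subset [Finite X] :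
    controllablePre G (⋃ i, WinApprox G i) ⊆ ⋃ i, WinApprox G i := by
  rw [controllablePre_iUnion_of_directed G (winApprox_mono G).directed_le]
  exact Set.iUnion_subset fun i =>
    Set.subset_iUnion_of_subset (i + 1) Set.subset_union_right

end ControllablePredecessor

section Plays

variable {Y X S : Type} {G : DFA (Set (Y ⊕ X)) S} {κ : S → Set Y}

theorem evalFrom_jointTrace_succ (G : DFA (Set (Y ⊕ X)) S) (s : S) (π : ℕ → Set Y × Set X)
    (n : ℕ) :
    G.evalFrom s (jointTrace π (n + 1)) =
      G.step (G.evalFrom s (jointTrace π n)) (joint (π n)) := by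
  simp [jointTrace, List.range_succ]

theorem GameConsistent.evalFrom_jointTrace_succ {π : ℕ → Set Y × Set X}
    (hπ : GameConsistent G κ π) (n : ℕ) :
    G.evalFrom G.start (jointTrace π (n + 1)) =
      G.step (G.evalFrom G.start (jointTrace π n))
        (joint (κ (G.evalFrom G.start (jointTrace π n)), (π n).2)) := by
  rw [_root_.evalFrom_jointTrace_succ, ← hπ n]

/-- The play in which the agent follows the game strategy `κ` and the environment answers
according to `e`, which like `κ` depends only on the current state. -/
def positionalPlay (G : DFA (Set (Y ⊕ X)) S) (κ : S → Set Y) (e : S → Set X) (n : ℕ) :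
    Set Y × Set X :=
  let s := (fun t => G.step t (joint (κ t, e t)))^[n] G.start
  (κ s, e s)

theorem evalFrom_jointTrace_positionalPlay (G : DFA (Set (Y ⊕ X)) S) (κ : S → Set Y)
    (e : S → Set X) (n : ℕ) :
    G.evalFrom G.start (jointTrace (positionalPlay G κ e) n) =
      (fun t => G.step t (joint (κ t, e t)))^[n] G.start := by
  induction n with
  | zero => rfl
  | succ n ih =>
    rw [evalFrom_jointTrace_succ, ih, Function.iterate_succ_apply']
    rfl

theorem gameConsistent_positionalPlay (G : DFA (Set (Y ⊕ X)) S) (κ : S → Set Y)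
    (e : S → Set X) : GameConsistent G κ (positionalPlay G κ e) := by
  intro n
  rw [evalFrom_jointTrace_positionalPlay]
  rfl

theorem GameWinning.start_mem_of_controllablePre_subset (hκ : GameWinning G κ) {T : Set S}
    (haccept : G.accept ⊆ T) (hpre : controllablePre G T ⊆ T) : G.start ∈ T := by
  by_contra hstart
  have hescape : ∀ t ∉ T, ∃ E : Set X, G.step t (joint (κ t, E)) ∉ T := by
    intro t ht
    by_contra! hforced
    exact ht (hpre ⟨κ t, hforced⟩)
  choose! e he using hescape
  have houtside : Set.MapsTo (fun t => G.step t (joint (κ t, e t))) Tᶜ Tᶜ := he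
  obtain ⟨n, hn⟩ := hκ _ (gameConsistent_positionalPlay G κ e)
  rw [evalFrom_jointTrace_positionalPlay] at hn
  exact houtside.iterate n hstart (haccept hn)

theorem gameWinning_of_forall_step_mem {U : ℕ → Set S} (hzero : U 0 ⊆ G.accept)
    (hstep : ∀ i, ∀ s ∈ U (i + 1), s ∉ G.accept →
      ∀ E : Set X, G.step s (joint (κ s, E)) ∈ U i)
    {i : ℕ} (hstart : G.start ∈ U i) : GameWinning G κ := by
  intro π hπ
  suffices hreach : ∀ i n, G.evalFrom G.start (jointTrace π n) ∈ U i →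
      ∃ k, G.evalFrom G.start (jointTrace π k) ∈ G.accept from hreach i 0 hstart
  intro i
  induction i with
  | zero => exact fun n hn => ⟨n, hzero hn⟩
  | succ i ih =>
    intro n hn
    by_cases hacc : G.evalFrom G.start (jointTrace π n) ∈ G.accept
    · exact ⟨n, hacc⟩
    · refine ih (n + 1) ?_
      rw [hπ.evalFrom_jointTrace_succ]
      exact hstep i _ hn hacc _

end Plays

theorem exists_forall_mem_winApprox_gameWinning {Y X S : Type} (G : DFA (Set (Y ⊕ X)) S) :
    ∃ κ : S → Set Y, ∀ s ∈ ⋃ i, WinApprox G i, GameWinning { G with start := s } κ := by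
  obtain ⟨κ, hκ⟩ := exists_strategy_forall_mem_controllablePre G (winApprox_mono G)
  refine ⟨κ, fun s hs => ?_⟩
  obtain ⟨i, hi⟩ := Set.mem_iUnion.1 hs
  refine gameWinning_of_forall_step_mem (U := WinApprox G) subset_rfl
    (fun j t ht hacc => hκ t j ?_) hi
  rw [winApprox_succ] at ht
  exact ht.resolve_left hacc

theorem game_winning_iff_mem_winning_region_general {Y X S : Type} [Finite X]
    (G : DFA (Set (Y ⊕ X)) S) (s : S) :
    (∃ κ : S → Set Y, GameWinning { G with start := s } κ) ↔ s ∈ ⋃ i : ℕ, WinApprox G i := by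
  constructor
  · rintro ⟨κ, hκ⟩
    exact hκ.start_mem_of_controllablePre_subset (Set.subset_iUnion (WinApprox G) 0)
      (controllablePre_iUnion_winApprox_subset G)
  · intro hs
    obtain ⟨κ, hκ⟩ := exists_forall_mem_winApprox_gameWinning G
    exact ⟨κ, hκ s hs⟩

/-- There is a game strategy winning in the game G_s (G with start state
changed to s) iff s belongs to the winning region ⋃ᵢ Wᵢ. -/
theorem game_winning_iff_mem_winning_region {Y X S : Type}
    [Fintype Y] [Fintype X] [Fintype S]
    (G : DFA (Set (Y ⊕ X)) S) (s : S) :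
    (∃ κ : S → Set Y, GameWinning { G with start := s } κ) ↔ s ∈ ⋃ i : ℕ, WinApprox G i :=
  game_winning_iff_mem_winning_region_general G s
end

section
/- Let G be a DFA game over disjoint finite atom sets Y and X and let κ be a game strategy that is winning in G. Then the induced agent strategy σ_(G,κ) has the property that every σ_(G,κ)-consistent play has a finite prefix accepted by G. In particular, if the words accepted by G are exactly the finite, possibly empty traces satisfying an LTLf formula φ over Y ∪ X, then σ_(G,κ) is a winning strategy for φ. -/
/-- A strategy σ is winning for the LTLf formula φ over atoms Y ∪ X if every
σ-consistent play has a finite, possibly empty, prefix satisfying φ. -/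
def WinningFor {Y X : Type} (σ : List (Set X) → Set Y) (φ : LTLf (Y ⊕ X)) : Prop :=
  ∀ π : ℕ → Set Y × Set X, PlayConsistent σ π → ∃ k : ℕ, LTLf.Sat (jointTrace π k) φ

/-- A strategy σ is winning for φ assuming the history h if for every σ-consistent play τ
the concatenation h·τ has a finite, possibly empty, prefix (extending h) satisfying φ. -/
def WinningAssuming {Y X : Type} (σ : List (Set X) → Set Y) (φ : LTLf (Y ⊕ X))
    (h : List (Set Y × Set X)) : Prop :=
  ∀ π : ℕ → Set Y × Set X, PlayConsistent σ π →
    ∃ k : ℕ, LTLf.Sat (histTrace h ++ jointTrace π k) φ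

/-- A strategy σ solves incremental synthesis for (φ_org, h, φ_new) if every σ-consistent
play has a finite, possibly empty, prefix ρ such that h·ρ satisfies φ_org and ρ
satisfies φ_new. -/
def SolvesIncremental {Y X : Type} (σ : List (Set X) → Set Y) (φorg : LTLf (Y ⊕ X))
    (h : List (Set Y × Set X)) (φnew : LTLf (Y ⊕ X)) : Prop :=
  ∀ π : ℕ → Set Y × Set X, PlayConsistent σ π →
    ∃ k : ℕ, LTLf.Sat (histTrace h ++ jointTrace π k) φorg ∧ LTLf.Sat (jointTrace π k) φnew
/-!
The induced strategy runs `G` on the environment moves alone, reconstructing the agent moves with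
`κ`. As long as the agent moves of a play agree with `κ`, this simulation visits the states that `G`
reaches on the joint trace. Consistency with the induced strategy and with `κ` prescribe the same
move after every such prefix, so they allow exactly the same plays.
-/

section InducedStrategy

variable {Y X S : Type} {G : DFA (Set (Y ⊕ X)) S} {κ : S → Set Y} {π : ℕ → Set Y × Set X}

theorem jointTrace_succ (π : ℕ → Set Y × Set X) (k : ℕ) :
    jointTrace π (k + 1) = jointTrace π k ++ [joint (π k)] := by
  simp only [jointTrace, List.range_succ, List.map_append, List.map_singleton]

theorem inducedState_append_singleton (G : DFA (Set (Y ⊕ X)) S) (κ : S → Set Y) (s : S)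
    (e : List (Set X)) (x : Set X) :
    inducedState G κ s (e ++ [x]) =
      G.step (inducedState G κ s e) (joint (κ (inducedState G κ s e), x)) := by
  induction e generalizing s with
  | nil => rfl
  | cons _ _ ih => exact ih _

theorem inducedState_eq_evalFrom_jointTrace {s : S} {k : ℕ}
    (hπ : ∀ i < k, (π i).1 = κ (G.evalFrom s (jointTrace π i))) :
    inducedState G κ s ((List.range k).map fun j => (π j).2) =
      G.evalFrom s (jointTrace π k) := by
  induction k with
  | zero => rfl
  | succ k ih =>
    have hstate := ih fun i hi => hπ i (Nat.lt_succ_of_lt hi)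
    have hmove : κ (G.evalFrom s (jointTrace π k)) = (π k).1 := (hπ k k.lt_succ_self).symm
    rw [List.range_succ, List.map_append, List.map_singleton, inducedState_append_singleton,
      hstate, hmove, jointTrace_succ, DFA.evalFrom_append_singleton]

theorem playConsistent_inducedStrategy_iff_gameConsistent :
    PlayConsistent (inducedStrategy G κ) π ↔ GameConsistent G κ π := by
  constructor
  · intro hπ k
    induction k using Nat.strong_induction_on with
    | h k ih => exact (hπ k).trans (congrArg κ (inducedState_eq_evalFrom_jointTrace ih))
  · intro hπ k
    have hstate := inducedState_eq_evalFrom_jointTrace (k := k) fun i _ => hπ i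
    exact (hπ k).trans (congrArg κ hstate.symm)

theorem winningFor_iff_of_mem_accepts_iff_sat {σ : List (Set X) → Set Y} {φ : LTLf (Y ⊕ X)}
    (hφ : ∀ τ : List (Set (Y ⊕ X)), τ ∈ G.accepts ↔ LTLf.Sat τ φ) :
    WinningFor σ φ ↔ ∀ π : ℕ → Set Y × Set X, PlayConsistent σ π →
      ∃ k : ℕ, G.evalFrom G.start (jointTrace π k) ∈ G.accept := by
  simp only [WinningFor, ← hφ, DFA.mem_accepts, DFA.eval]

end InducedStrategy

/-- If κ is a winning game strategy in the DFA game G, then every play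
consistent with the induced agent strategy σ_(G,κ) has a finite prefix accepted by G;
in particular, if the words accepted by G are exactly the finite, possibly empty, traces
satisfying an LTLf formula φ over Y ∪ X, then σ_(G,κ) is winning for φ. -/
theorem induced_strategy_winning {Y X S : Type}
    (G : DFA (Set (Y ⊕ X)) S) (κ : S → Set Y) (hκ : GameWinning G κ) :
    (∀ π : ℕ → Set Y × Set X, PlayConsistent (inducedStrategy G κ) π →
        ∃ k : ℕ, G.evalFrom G.start (jointTrace π k) ∈ G.accept) ∧
      ∀ φ : LTLf (Y ⊕ X), (∀ τ : List (Set (Y ⊕ X)), τ ∈ G.accepts ↔ LTLf.Sat τ φ) →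
        WinningFor (inducedStrategy G κ) φ := by
  have hacc : ∀ π : ℕ → Set Y × Set X, PlayConsistent (inducedStrategy G κ) π →
      ∃ k : ℕ, G.evalFrom G.start (jointTrace π k) ∈ G.accept :=
    fun π hπ => hκ π (playConsistent_inducedStrategy_iff_gameConsistent.1 hπ)
  exact ⟨hacc, fun φ hφ => (winningFor_iff_of_mem_accepts_iff_sat hφ).2 hacc⟩
end

section
/- For every LTLf formula φ in negation normal form over a finite set of atoms P, there exists a DFA over the alphabet 2^P with at most 2^(2^n) states, where n is the number of subformulas of φ, whose accepted words are exactly the finite, possibly empty traces satisfying φ. -/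
/-- The set of subformulas of an LTLf formula (nodes of its abstract syntax tree,
counted up to equality of subformulas). -/
def LTLf.subformulas {P : Type} [DecidableEq P] : LTLf P → Finset (LTLf P)
  | .tt => {LTLf.tt}
  | .ff => {LTLf.ff}
  | .atom p => {LTLf.atom p}
  | .natom p => {LTLf.natom p}
  | .conj a b => insert (LTLf.conj a b) (a.subformulas ∪ b.subformulas)
  | .disj a b => insert (LTLf.disj a b) (a.subformulas ∪ b.subformulas)
  | .next a => insert (LTLf.next a) a.subformulas
  | .wnext a => insert (LTLf.wnext a) a.subformulas
  | .untl a b => insert (LTLf.untl a b) (a.subformulas ∪ b.subformulas)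
  | .release a b => insert (LTLf.release a b) (a.subformulas ∪ b.subformulas)

section BackwardReading

variable {α β : Type*} {f : List α → β}

theorem apply_append_eq_of_apply_cons_eq
    (hcons : ∀ a x y, f x = f y → f (a :: x) = f (a :: y)) {x y : List α} (h : f x = f y)
    (u : List α) : f (u ++ x) = f (u ++ y) := by
  induction u with
  | nil => exact h
  | cons a u ih => exact hcons a _ _ ih

variable {L : Language α}

theorem leftInvOn_preimage_image_range_leftQuotient
    (hL : ∀ u x y, f x = f y → (u ++ x ∈ L ↔ u ++ y ∈ L)) :
    Set.LeftInvOn (fun S : Set β => f ⁻¹' S) (fun K : Language α => f '' K)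
      (Set.range L.leftQuotient) := by
  rintro _ ⟨u, rfl⟩
  exact (Set.subset_preimage_image f _).antisymm' fun y ⟨x, hx, hxy⟩ => (hL u x y hxy).1 hx

theorem exists_dfa_card_le_two_pow [Finite β]
    (hL : ∀ u x y, f x = f y → (u ++ x ∈ L ↔ u ++ y ∈ L)) :
    ∃ (k : ℕ) (A : DFA α (Fin k)), k ≤ 2 ^ Nat.card β ∧ A.accepts = L := by
  have hinj := (leftInvOn_preimage_image_range_leftQuotient hL).injOn.injective
  have : Finite (Set.range L.leftQuotient) := Finite.of_injective _ hinj
  have := Fintype.ofFinite β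
  refine ⟨_, DFA.reindex (Finite.equivFin _) L.toDFA, ?_, ?_⟩
  · calc Nat.card (Set.range L.leftQuotient)
        ≤ Nat.card (Set β) := Nat.card_le_card_of_injective _ hinj
      _ = 2 ^ Nat.card β := by
        rw [Nat.card_eq_fintype_card, Nat.card_eq_fintype_card, Fintype.card_set]
  · rw [DFA.accepts_reindex, Language.accepts_toDFA]

end BackwardReading

theorem natCard_prop_prod_set {α : Type*} (s : Finset α) :
    Nat.card (Prop × Set s) = 2 ^ (s.card + 1) := by
  simp [pow_succ']

namespace LTLf

variable {P : Type}

/-- The temporal formulas, those with a modality at the root. -/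
def isTemporal : LTLf P → Bool
  | .next _ | .wnext _ | .untl _ _ | .release _ _ => true
  | _ => false

/-- The obligation that a temporal formula, evaluated on `w :: τ`, puts on the tail `τ`. It is set
to `False` for the other formulas, which put no obligation of their own on the tail. -/
def TailSat (τ : List (Set P)) : LTLf P → Prop
  | .next φ => τ ≠ [] ∧ Sat τ φ
  | .wnext φ => τ = [] ∨ Sat τ φ
  | .untl φ ψ => Sat τ (.untl φ ψ)
  | .release φ ψ => Sat τ (.release φ ψ)
  | _ => False

variable [DecidableEq P]

@[simp]
theorem mem_subformulas_self (φ : LTLf P) : φ ∈ φ.subformulas := by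
  cases φ <;> simp [subformulas]

theorem subformulas_subset {φ ψ : LTLf P} (h : ψ ∈ φ.subformulas) :
    ψ.subformulas ⊆ φ.subformulas := by
  induction φ with
  | tt | ff | atom | natom =>
    rw [subformulas, Finset.mem_singleton] at h
    rw [h]
  | next a iha | wnext a iha =>
    rw [subformulas, Finset.mem_insert] at h
    obtain rfl | h := h
    · rfl
    · exact (iha h).trans (Finset.subset_insert _ _)
  | conj a b iha ihb | disj a b iha ihb | untl a b iha ihb | release a b iha ihb =>
    rw [subformulas, Finset.mem_insert, Finset.mem_union] at h
    obtain rfl | h | h := h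
    · rfl
    · exact (iha h).trans (Finset.subset_union_left.trans (Finset.subset_insert _ _))
    · exact (ihb h).trans (Finset.subset_union_right.trans (Finset.subset_insert _ _))

theorem exists_mem_subformulas_not_isTemporal (φ : LTLf P) :
    ∃ ψ ∈ φ.subformulas, ¬ψ.isTemporal := by
  induction φ with
  | tt | ff | atom | natom | conj | disj => exact ⟨_, mem_subformulas_self _, Bool.false_ne_true⟩
  | next a iha | wnext a iha | untl a _ iha _ | release a _ iha _ =>
    obtain ⟨ψ, hψ, h⟩ := iha
    exact ⟨ψ, by simp [subformulas, hψ], h⟩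

/-- The temporal subformulas of `φ`, counted like `subformulas` up to equality; they are the ones
that put obligations on the tail of the trace. -/
def temporalSubformulas (φ : LTLf P) : Finset (LTLf P) :=
  φ.subformulas.filter fun ψ => ψ.isTemporal

theorem card_temporalSubformulas_lt (φ : LTLf P) :
    φ.temporalSubformulas.card < φ.subformulas.card := by
  obtain ⟨ψ, hψ, hψ'⟩ := φ.exists_mem_subformulas_not_isTemporal
  exact Finset.card_lt_card (Finset.filter_ssubset.2 ⟨ψ, hψ, hψ'⟩)

/-- Two traces meet the same obligations of temporal subformulas of `φ`, so that exchanging one for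
the other as a tail does not affect the satisfaction of `φ`. -/
def TailEquiv (φ : LTLf P) (τ τ' : List (Set P)) : Prop :=
  ∀ ψ ∈ φ.temporalSubformulas, (TailSat τ ψ ↔ TailSat τ' ψ)

variable {φ ψ : LTLf P} {τ τ' : List (Set P)}

theorem TailEquiv.of_mem_subformulas (h : φ.TailEquiv τ τ') (hψ : ψ ∈ φ.subformulas) :
    ψ.TailEquiv τ τ' :=
  fun χ hχ => h χ (Finset.filter_subset_filter _ (subformulas_subset hψ) hχ)

theorem TailEquiv.tailSat_iff (h : φ.TailEquiv τ τ') (hφ : φ.isTemporal) :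
    TailSat τ φ ↔ TailSat τ' φ :=
  h φ (Finset.mem_filter.2 ⟨φ.mem_subformulas_self, hφ⟩)

theorem TailEquiv.sat_cons_iff (h : φ.TailEquiv τ τ') (w : Set P) :
    Sat (w :: τ) φ ↔ Sat (w :: τ') φ := by
  induction φ with
  | tt | ff | atom | natom => simp only [Sat]
  | next | wnext => simpa only [Sat, TailSat] using h.tailSat_iff rfl
  | conj a b iha ihb | disj a b iha ihb =>
    have ha := iha (h.of_mem_subformulas (by simp [subformulas]))
    have hb := ihb (h.of_mem_subformulas (by simp [subformulas]))
    rw [Sat, Sat, ha, hb]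
  | untl a b iha ihb | release a b iha ihb =>
    have ha := iha (h.of_mem_subformulas (by simp [subformulas]))
    have hb := ihb (h.of_mem_subformulas (by simp [subformulas]))
    have hself := h.tailSat_iff rfl
    simp only [TailSat] at hself
    rw [Sat, Sat, ha, hb, hself]

theorem TailEquiv.tailSat_cons_iff (h : φ.TailEquiv τ τ') (w : Set P) :
    TailSat (w :: τ) φ ↔ TailSat (w :: τ') φ := by
  cases φ with
  | tt | ff | atom | natom | conj | disj => rfl
  | next a | wnext a =>
    have ha := (h.of_mem_subformulas (ψ := a) (by simp [subformulas])).sat_cons_iff w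
    simp [TailSat, ha]
  | untl | release => exact h.sat_cons_iff w

theorem TailEquiv.cons (h : φ.TailEquiv τ τ') (w : Set P) :
    φ.TailEquiv (w :: τ) (w :: τ') :=
  fun _ hψ => (h.of_mem_subformulas (Finset.mem_filter.1 hψ).1).tailSat_cons_iff w

/-- What a reader that scans a trace from right to left remembers of the suffix `τ`: whether `τ`
satisfies `φ`, and which temporal subformulas of `φ` have their obligation on the tail met by
`τ`. -/
def profile (φ : LTLf P) (τ : List (Set P)) : Prop × Set φ.temporalSubformulas :=
  (Sat τ φ, {ψ | TailSat τ ψ})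

theorem profile_eq_iff :
    φ.profile τ = φ.profile τ' ↔ (Sat τ φ ↔ Sat τ' φ) ∧ φ.TailEquiv τ τ' := by
  simp [profile, TailEquiv, Set.ext_iff]

theorem profile_cons_congr (w : Set P) (τ τ' : List (Set P)) (h : φ.profile τ = φ.profile τ') :
    φ.profile (w :: τ) = φ.profile (w :: τ') :=
  have htail := (profile_eq_iff.1 h).2
  profile_eq_iff.2 ⟨htail.sat_cons_iff w, htail.cons w⟩

theorem sat_append_congr (u τ τ' : List (Set P)) (h : φ.profile τ = φ.profile τ') :
    Sat (u ++ τ) φ ↔ Sat (u ++ τ') φ :=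
  (profile_eq_iff.1 (apply_append_eq_of_apply_cons_eq profile_cons_congr h u)).1

end LTLf

theorem exists_dfa_for_ltlf_general {P : Type} [DecidableEq P] (φ : LTLf P) :
    ∃ (k : ℕ) (A : DFA (Set P) (Fin k)),
      k ≤ 2 ^ (2 ^ (φ.temporalSubformulas.card + 1)) ∧
        ∀ τ : List (Set P), τ ∈ A.accepts ↔ LTLf.Sat τ φ := by
  obtain ⟨k, A, hk, hA⟩ :=
    exists_dfa_card_le_two_pow (L := {τ | LTLf.Sat τ φ}) (f := φ.profile) LTLf.sat_append_congr
  exact ⟨k, A, hk.trans_eq (by rw [natCard_prop_prod_set]), fun τ => by rw [hA]; rfl⟩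

/-- For every LTLf formula φ in NNF over a finite set of atoms P there is
a DFA over the alphabet 2^P, with at most 2^(2^n) states where n is the number of
subformulas of φ, accepting exactly the finite, possibly empty, traces satisfying φ. -/
theorem exists_dfa_for_ltlf {P : Type} [Fintype P] [DecidableEq P] (φ : LTLf P) :
    ∃ (k : ℕ) (A : DFA (Set P) (Fin k)),
      k ≤ 2 ^ (2 ^ φ.subformulas.card) ∧
        ∀ τ : List (Set P), τ ∈ A.accepts ↔ LTLf.Sat τ φ := by
  obtain ⟨k, A, hk, hA⟩ := exists_dfa_for_ltlf_general φ
  have hcard : φ.temporalSubformulas.card + 1 ≤ φ.subformulas.card := φ.card_temporalSubformulas_lt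
  exact ⟨k, A, hk.trans (by gcongr <;> norm_num), hA⟩
end
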